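/- Let W(y|x) and V(y|x) be two channels with finite input alphabet X and finite output alphabet Y with |Y| ≥ 2 (i.e., for each x ∈ X, W(·|x) and V(·|x) are probability distributions on Y), and let 0 ≤ ε ≤ 1/2. If |W(y|x) − V(y|x)| ≤ ε for all (x,y) ∈ X × Y, then for every probability distribution P on X, |I(P,W) − I(P,V)| ≤ 2(|Y|−1)·h_b(ε) + 2(|Y|−1)·log₂(|Y|−1)·ε. -/

import Mathlib

open Finset

/-- The binary entropy function `h_b(x) = −x·log₂ x − (1−x)·log₂(1−x)`,
with the convention `0 · log₂ 0 = 0` (in Lean, `Real.logb 2 0 = 0`). -/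
noncomputable def binEnt (x : ℝ) : ℝ :=
  -(x * Real.logb 2 x) - (1 - x) * Real.logb 2 (1 - x)

/-- The mutual information
`I(P,W) = ∑_x ∑_y P(x)·W(y|x)·log₂( W(y|x) / ∑_{x'} P(x')·W(y|x') )`,
with the convention that terms with `P(x)·W(y|x) = 0` are zero (automatic here,
since such terms are a product with the factor `P x * W x y = 0`). -/
noncomputable def mutualInfo {X Y : Type*} [Fintype X] [Fintype Y]
    (P : X → ℝ) (W : X → Y → ℝ) : ℝ :=
  ∑ x, ∑ y, P x * W x y * Real.logb 2 (W x y / ∑ x', P x' * W x' y)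

/-!
Writing `I(P, W) = H(PW) - H(W|P)`, it suffices to compare the entropies of two distributions
`p`, `q` on `n` letters. Split `p = m + r` with `m = p ⊓ q`, so that `r` has total mass the
variation distance `T`. Subadditivity of `x ↦ -x log x` bounds `H(p)` by the contributions of `m`
and `r`. By the log-sum inequality `m` contributes at most `H(q) - (1 - T) log (1 - T)`, and by
Jensen `r`, which vanishes at some letter, contributes at most `-T log T + T log (n - 1)`. Hence
`|H(p) - H(q)| ≤ h(T) + T log (n - 1)`.
Finally `T ≤ n ε / 2 ≤ (n - 1) ε`, and concavity of `h` gives `h(T) ≤ (n - 1) h(ε)`.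
-/

section NegMulLog

variable {ι : Type*} {s : Finset ι} {f g : ι → ℝ}

lemma negMulLog_add_le {x y : ℝ} (hx : 0 ≤ x) (hy : 0 ≤ y) :
    Real.negMulLog (x + y) ≤ Real.negMulLog x + Real.negMulLog y := by
  have mul_log_le : ∀ {a b : ℝ}, 0 ≤ a → 0 ≤ b → a * Real.log a ≤ a * Real.log (a + b) := by
    intro a b ha hb
    rcases ha.eq_or_lt with rfl | ha
    · simp
    · gcongr
      linarith
  have hxy := mul_log_le hx hy
  have hyx := mul_log_le hy hx
  rw [add_comm y x] at hyx
  unfold Real.negMulLog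
  linarith

lemma sum_negMulLog_le_negMulLog_sum_add (hf : ∀ i ∈ s, 0 ≤ f i) :
    ∑ i ∈ s, Real.negMulLog (f i) ≤
      Real.negMulLog (∑ i ∈ s, f i) + (∑ i ∈ s, f i) * Real.log #s := by
  rcases s.eq_empty_or_nonempty with rfl | hs
  · simp
  have hcard : (#s : ℝ) ≠ 0 := by exact_mod_cast hs.card_pos.ne'
  have jensen : ∑ i ∈ s, (#s : ℝ)⁻¹ * Real.negMulLog (f i) ≤
      Real.negMulLog (∑ i ∈ s, (#s : ℝ)⁻¹ * f i) :=
    Real.concaveOn_negMulLog.le_map_sum (fun _ _ => by positivity)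
      (by simp [hcard]) hf
  rw [← mul_sum, ← mul_sum, inv_mul_le_iff₀ (by positivity), Real.negMulLog_mul] at jensen
  refine jensen.trans_eq ?_
  simp only [Real.negMulLog, Real.log_inv]
  field_simp
  ring

/- The summand of the log-sum inequality: when `M` is the sum of all `x` and the `y` sum to at
most one, the terms `y * M - x` have nonpositive sum. -/
lemma negMulLog_le_add_of_le {x y M : ℝ} (hx : 0 ≤ x) (hxy : x ≤ y) (hy : y ≤ 1) (hM : 0 < M) :
    Real.negMulLog x ≤ Real.negMulLog y - x * Real.log M + (y * M - x) := by
  rcases hx.eq_or_lt with rfl | hx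
  · have := Real.negMulLog_nonneg hxy hy
    have := mul_nonneg hxy hM.le
    simp only [Real.negMulLog_zero]
    linarith
  have hy₀ : 0 < y := hx.trans_le hxy
  have tangent : x * Real.log (y * M / x) ≤ y * M - x := by
    have := mul_le_mul_of_nonneg_left
      (Real.log_le_sub_one_of_pos (show 0 < y * M / x by positivity)) hx.le
    rwa [mul_sub, mul_one, mul_div_cancel₀ _ hx.ne'] at this
  rw [Real.log_div (by positivity) hx.ne', Real.log_mul hy₀.ne' hM.ne'] at tangent
  have := mul_le_mul_of_nonpos_right hxy (Real.log_nonpos hy₀.le hy)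
  unfold Real.negMulLog
  linarith

lemma sum_negMulLog_le_add_of_le (hf : ∀ i ∈ s, 0 ≤ f i) (hfg : ∀ i ∈ s, f i ≤ g i)
    (hg : ∑ i ∈ s, g i ≤ 1) :
    ∑ i ∈ s, Real.negMulLog (f i) ≤
      ∑ i ∈ s, Real.negMulLog (g i) + Real.negMulLog (∑ i ∈ s, f i) := by
  have hg₀ : ∀ i ∈ s, 0 ≤ g i := fun i hi => (hf i hi).trans (hfg i hi)
  have hg₁ : ∀ i ∈ s, g i ≤ 1 := fun i hi => (single_le_sum hg₀ hi).trans hg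
  rcases (sum_nonneg hf).eq_or_lt with hM | hM
  · have hf₀ := (sum_eq_zero_iff_of_nonneg hf).1 hM.symm
    rw [← hM, Real.negMulLog_zero, add_zero]
    refine sum_le_sum fun i hi => ?_
    rw [hf₀ i hi, Real.negMulLog_zero]
    exact Real.negMulLog_nonneg (hg₀ i hi) (hg₁ i hi)
  set M := ∑ i ∈ s, f i
  calc
    ∑ i ∈ s, Real.negMulLog (f i)
      ≤ ∑ i ∈ s, (Real.negMulLog (g i) - f i * Real.log M + (g i * M - f i)) :=
        sum_le_sum fun i hi => negMulLog_le_add_of_le (hf i hi) (hfg i hi) (hg₁ i hi) hM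
    _ = ∑ i ∈ s, Real.negMulLog (g i) + Real.negMulLog M + ((∑ i ∈ s, g i) * M - M) := by
        simp only [sum_add_distrib, sum_sub_distrib, ← sum_mul, Real.negMulLog, M]
        ring
    _ ≤ ∑ i ∈ s, Real.negMulLog (g i) + Real.negMulLog M := by
        have := mul_le_mul_of_nonneg_right hg hM.le
        linarith

end NegMulLog

section QaryEntropy

lemma binEntropy_le_mul_binEntropy {t c ε : ℝ} (ht₀ : 0 ≤ t) (ht₁ : t ≤ 1) (hc : 1 ≤ c)
    (htc : t ≤ c * ε) (hε : ε ≤ 1 / 2) : Real.binEntropy t ≤ c * Real.binEntropy ε := by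
  have hc₀ : 0 < c := by linarith
  have hdiv₀ : 0 ≤ t / c := by positivity
  have hdiv : t / c ≤ ε := (div_le_iff₀' hc₀).2 htc
  have concave : c⁻¹ * Real.binEntropy t ≤ Real.binEntropy (t / c) := by
    have := Real.strictConcave_binEntropy.concaveOn.2 ⟨ht₀, ht₁⟩
      (Set.left_mem_Icc.2 zero_le_one) (inv_nonneg.2 hc₀.le)
      (sub_nonneg.2 (inv_le_one_of_one_le₀ hc)) (add_sub_cancel _ _)
    simpa [div_eq_inv_mul] using this
  calc
    Real.binEntropy t ≤ c * Real.binEntropy (t / c) := (inv_mul_le_iff₀ hc₀).1 concave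
    _ ≤ c * Real.binEntropy ε := by
      gcongr
      exact Real.binEntropy_strictMonoOn.monotoneOn ⟨hdiv₀, by linarith⟩
        ⟨hdiv₀.trans hdiv, by linarith⟩ hdiv

lemma qaryEntropy_le_of_le_mul {n : ℕ} (hn : 2 ≤ n) {t ε : ℝ} (ht₀ : 0 ≤ t) (ht₁ : t ≤ 1)
    (htε : t ≤ (n - 1) * ε) (hε : ε ≤ 1 / 2) :
    Real.qaryEntropy n t ≤ (n - 1) * (Real.binEntropy ε + Real.log (n - 1) * ε) := by
  have hn' : (1 : ℝ) ≤ n - 1 := by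
    have : (2 : ℝ) ≤ n := by exact_mod_cast hn
    linarith
  have hbin := binEntropy_le_mul_binEntropy ht₀ ht₁ hn' htε hε
  have hlog := mul_le_mul_of_nonneg_right htε (Real.log_nonneg hn')
  rw [Real.qaryEntropy]
  push_cast
  linarith

end QaryEntropy

section Entropy

variable {Y : Type*} [Fintype Y] {p q : Y → ℝ}

/-- The Shannon entropy `H(p) = -∑ y, p(y) log p(y)`, in nats. -/
noncomputable def shannonEntropy (p : Y → ℝ) : ℝ :=
  ∑ y, Real.negMulLog (p y)

/-- The total variation distance of two distributions, normalized to take values in `[0, 1]`. -/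
noncomputable def tvDist (p q : Y → ℝ) : ℝ :=
  (∑ y, |p y - q y|) / 2

lemma tvDist_comm (p q : Y → ℝ) : tvDist p q = tvDist q p := by
  simp only [tvDist, abs_sub_comm]

lemma tvDist_nonneg (p q : Y → ℝ) : 0 ≤ tvDist p q := by
  unfold tvDist
  positivity

lemma sum_min_eq_one_sub_tvDist (hp : ∑ y, p y = 1) (hq : ∑ y, q y = 1) :
    ∑ y, min (p y) (q y) = 1 - tvDist p q := by
  have hmin : ∀ y, min (p y) (q y) = (p y + q y - |p y - q y|) / 2 := fun y => by
    linarith [min_add_max (p y) (q y), max_sub_min_eq_abs' (p y) (q y)]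
  simp only [hmin, ← sum_div, sum_sub_distrib, sum_add_distrib, hp, hq, tvDist]
  ring

lemma tvDist_le_one (hp : p ∈ stdSimplex ℝ Y) (hq : q ∈ stdSimplex ℝ Y) : tvDist p q ≤ 1 := by
  have := sum_min_eq_one_sub_tvDist hp.2 hq.2
  have : 0 ≤ ∑ y, min (p y) (q y) := sum_nonneg fun y _ => le_min (hp.1 y) (hq.1 y)
  linarith

lemma tvDist_le_card_mul {ε : ℝ} (h : ∀ y, |p y - q y| ≤ ε) :
    tvDist p q ≤ Fintype.card Y * ε / 2 := by
  have := sum_le_card_nsmul univ _ ε fun y _ => h y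
  rw [card_univ, nsmul_eq_mul] at this
  unfold tvDist
  gcongr

lemma sum_negMulLog_sub_min_le (hp : p ∈ stdSimplex ℝ Y) (hq : q ∈ stdSimplex ℝ Y) :
    ∑ y, Real.negMulLog (p y - min (p y) (q y)) ≤
      Real.negMulLog (tvDist p q) + tvDist p q * Real.log (Fintype.card Y - 1) := by
  classical
  have hne : (univ : Finset Y).Nonempty := nonempty_of_sum_ne_zero (hp.2.trans_ne one_ne_zero)
  obtain ⟨a, -, ha⟩ := exists_le_of_sum_le hne (hp.2.trans hq.2.symm).le
  set r : Y → ℝ := fun y => p y - min (p y) (q y)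
  have hra : r a = 0 := by simp [r, ha]
  have hcard : (#(univ.erase a) : ℝ) = Fintype.card Y - 1 := by
    rw [cast_card_erase_of_mem (mem_univ a), card_univ]
  have hsum : ∑ y ∈ univ.erase a, r y = tvDist p q := by
    rw [sum_erase _ hra, sum_sub_distrib, sum_min_eq_one_sub_tvDist hp.2 hq.2, hp.2, sub_sub_cancel]
  have hsupp : ∑ y ∈ univ.erase a, Real.negMulLog (r y) = ∑ y, Real.negMulLog (r y) :=
    sum_erase _ (by rw [hra, Real.negMulLog_zero])
  rw [← hsupp, ← hcard, ← hsum]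
  exact sum_negMulLog_le_negMulLog_sum_add fun y _ => sub_nonneg.2 (min_le_left _ _)

lemma shannonEntropy_le_add_qaryEntropy_tvDist (hp : p ∈ stdSimplex ℝ Y)
    (hq : q ∈ stdSimplex ℝ Y) :
    shannonEntropy p ≤ shannonEntropy q + Real.qaryEntropy (Fintype.card Y) (tvDist p q) := by
  set m : Y → ℝ := fun y => min (p y) (q y)
  have hm₀ : ∀ y, 0 ≤ m y := fun y => le_min (hp.1 y) (hq.1 y)
  have hm : ∑ y, Real.negMulLog (m y) ≤
      shannonEntropy q + Real.negMulLog (1 - tvDist p q) := by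
    rw [← sum_min_eq_one_sub_tvDist hp.2 hq.2]
    exact sum_negMulLog_le_add_of_le (fun y _ => hm₀ y) (fun y _ => min_le_right _ _) hq.2.le
  calc
    shannonEntropy p = ∑ y, Real.negMulLog (m y + (p y - m y)) := by
      simp only [shannonEntropy, add_sub_cancel]
    _ ≤ ∑ y, (Real.negMulLog (m y) + Real.negMulLog (p y - m y)) :=
      sum_le_sum fun y _ => negMulLog_add_le (hm₀ y) (sub_nonneg.2 (min_le_left _ _))
    _ ≤ shannonEntropy q + Real.negMulLog (1 - tvDist p q) +
        (Real.negMulLog (tvDist p q) + tvDist p q * Real.log (Fintype.card Y - 1)) := by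
      rw [sum_add_distrib]
      exact add_le_add hm (sum_negMulLog_sub_min_le hp hq)
    _ = shannonEntropy q + Real.qaryEntropy (Fintype.card Y) (tvDist p q) := by
      rw [Real.qaryEntropy, Real.binEntropy_eq_negMulLog_add_negMulLog_one_sub]
      push_cast
      ring

lemma abs_shannonEntropy_sub_le (hp : p ∈ stdSimplex ℝ Y) (hq : q ∈ stdSimplex ℝ Y) :
    |shannonEntropy p - shannonEntropy q| ≤
      Real.qaryEntropy (Fintype.card Y) (tvDist p q) := by
  have hpq := shannonEntropy_le_add_qaryEntropy_tvDist hp hq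
  have hqp := shannonEntropy_le_add_qaryEntropy_tvDist hq hp
  rw [tvDist_comm] at hqp
  exact abs_sub_le_iff.2 ⟨by linarith, by linarith⟩

lemma abs_shannonEntropy_sub_le_of_close (hY : 2 ≤ Fintype.card Y) (hp : p ∈ stdSimplex ℝ Y)
    (hq : q ∈ stdSimplex ℝ Y) {ε : ℝ} (hε₀ : 0 ≤ ε) (hε₁ : ε ≤ 1 / 2)
    (h : ∀ y, |p y - q y| ≤ ε) :
    |shannonEntropy p - shannonEntropy q| ≤
      (Fintype.card Y - 1) * (Real.binEntropy ε + Real.log (Fintype.card Y - 1) * ε) := by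
  have htv : tvDist p q ≤ (Fintype.card Y - 1) * ε := by
    have hY' : (2 : ℝ) ≤ Fintype.card Y := by exact_mod_cast hY
    have := mul_le_mul_of_nonneg_right hY' hε₀
    linarith [tvDist_le_card_mul h]
  exact (abs_shannonEntropy_sub_le hp hq).trans
    (qaryEntropy_le_of_le_mul hY (tvDist_nonneg p q) (tvDist_le_one hp hq) htv hε₁)

end Entropy

lemma abs_sum_mul_sub_sum_mul_le {ι : Type*} [Fintype ι] {w a b : ι → ℝ} {c : ℝ}
    (hw : w ∈ stdSimplex ℝ ι) (h : ∀ i, |a i - b i| ≤ c) :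
    |∑ i, w i * a i - ∑ i, w i * b i| ≤ c := by
  calc
    |∑ i, w i * a i - ∑ i, w i * b i| = |∑ i, w i * (a i - b i)| := by
      simp only [mul_sub, sum_sub_distrib]
    _ ≤ ∑ i, |w i * (a i - b i)| := abs_sum_le_sum_abs _ _
    _ ≤ ∑ i, w i * c := by
      refine sum_le_sum fun i _ => ?_
      rw [abs_mul, abs_of_nonneg (hw.1 i)]
      exact mul_le_mul_of_nonneg_left (h i) (hw.1 i)
    _ = c := by rw [← sum_mul, hw.2, one_mul]

section Channel

variable {X Y : Type*} [Fintype X] {P : X → ℝ} {W : X → Y → ℝ}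

/-- The output distribution `PW` of the channel `W` under the input distribution `P`. -/
def outputDist (P : X → ℝ) (W : X → Y → ℝ) : Y → ℝ :=
  fun y => ∑ x, P x * W x y

lemma mutualInfo_term_eq (hP : ∀ x, 0 ≤ P x) (hW : ∀ x y, 0 ≤ W x y) (x : X) (y : Y) :
    P x * W x y * Real.logb 2 (W x y / outputDist P W y) =
      (-(P x * W x y * Real.log (outputDist P W y)) - P x * Real.negMulLog (W x y)) /
        Real.log 2 := by
  rcases eq_or_ne (P x * W x y) 0 with h₀ | h₀
  · have : P x * Real.negMulLog (W x y) = -(P x * W x y) * Real.log (W x y) := by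
      rw [Real.negMulLog]
      ring
    simp [this, h₀]
  have hout : 0 < outputDist P W y :=
    ((mul_nonneg (hP x) (hW x y)).lt_of_ne' h₀).trans_le <|
      single_le_sum (f := fun x' => P x' * W x' y) (fun x' _ => mul_nonneg (hP x') (hW x' y))
        (mem_univ x)
  rw [Real.logb, Real.log_div (right_ne_zero_of_mul h₀) hout.ne', Real.negMulLog]
  ring

variable [Fintype Y]

/-- The conditional entropy `H(W|P)` of the output of the channel `W` given its input, which has
distribution `P`, in nats. -/
noncomputable def condEntropy (P : X → ℝ) (W : X → Y → ℝ) : ℝ :=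
  ∑ x, P x * shannonEntropy (W x)

lemma outputDist_mem_stdSimplex (hP : P ∈ stdSimplex ℝ X) (hW : ∀ x, W x ∈ stdSimplex ℝ Y) :
    outputDist P W ∈ stdSimplex ℝ Y := by
  have := (convex_stdSimplex ℝ Y).sum_mem (t := univ) (fun x _ => hP.1 x) hP.2 fun x _ => hW x
  convert this
  ext y
  simp [outputDist]

lemma mutualInfo_eq_shannonEntropy_sub_condEntropy (hP : ∀ x, 0 ≤ P x)
    (hW : ∀ x y, 0 ≤ W x y) :
    mutualInfo P W = (shannonEntropy (outputDist P W) - condEntropy P W) / Real.log 2 := by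
  have houtput : ∑ x, ∑ y, -(P x * W x y * Real.log (outputDist P W y)) =
      shannonEntropy (outputDist P W) := by
    rw [sum_comm]
    refine sum_congr rfl fun y _ => ?_
    rw [sum_neg_distrib, ← sum_mul, Real.negMulLog, neg_mul, outputDist]
  calc
    mutualInfo P W = ∑ x, ∑ y, P x * W x y * Real.logb 2 (W x y / outputDist P W y) := rfl
    _ = (shannonEntropy (outputDist P W) - condEntropy P W) / Real.log 2 := by
      simp only [mutualInfo_term_eq hP hW, ← sum_div, sum_sub_distrib, houtput, condEntropy,
        shannonEntropy, mul_sum]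

end Channel

lemma binEnt_eq_binEntropy_div (x : ℝ) : binEnt x = Real.binEntropy x / Real.log 2 := by
  rw [binEnt, Real.binEntropy_eq_negMulLog_add_negMulLog_one_sub]
  unfold Real.negMulLog Real.logb
  ring

/-- If two channels `W, V` with finite input alphabet `X` and finite
output alphabet `Y`, `|Y| ≥ 2`, satisfy `|W(y|x) − V(y|x)| ≤ ε` for all `(x,y)`,
where `0 ≤ ε ≤ 1/2`, then for every input distribution `P`,
`|I(P,W) − I(P,V)| ≤ 2(|Y|−1)·h_b(ε) + 2(|Y|−1)·log₂(|Y|−1)·ε`. -/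
theorem mutualInfo_diff_le_of_close {X Y : Type*} [Fintype X] [Fintype Y]
    (hY : 2 ≤ Fintype.card Y)
    (W V : X → Y → ℝ)
    (hW0 : ∀ x y, 0 ≤ W x y) (hW1 : ∀ x, ∑ y, W x y = 1)
    (hV0 : ∀ x y, 0 ≤ V x y) (hV1 : ∀ x, ∑ y, V x y = 1)
    (ε : ℝ) (hε0 : 0 ≤ ε) (hε1 : ε ≤ 1 / 2)
    (hclose : ∀ x y, |W x y - V x y| ≤ ε)
    (P : X → ℝ) (hP0 : ∀ x, 0 ≤ P x) (hP1 : ∑ x, P x = 1) :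
    |mutualInfo P W - mutualInfo P V| ≤
      2 * ((Fintype.card Y : ℝ) - 1) * binEnt ε +
        2 * ((Fintype.card Y : ℝ) - 1) * Real.logb 2 ((Fintype.card Y : ℝ) - 1) * ε := by
  have hP : P ∈ stdSimplex ℝ X := ⟨hP0, hP1⟩
  have hW : ∀ x, W x ∈ stdSimplex ℝ Y := fun x => ⟨hW0 x, hW1 x⟩
  have hV : ∀ x, V x ∈ stdSimplex ℝ Y := fun x => ⟨hV0 x, hV1 x⟩
  set n := (Fintype.card Y : ℝ)
  set B : ℝ := (n - 1) * (Real.binEntropy ε + Real.log (n - 1) * ε) with hB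
  have houtput : |shannonEntropy (outputDist P W) - shannonEntropy (outputDist P V)| ≤ B :=
    abs_shannonEntropy_sub_le_of_close hY (outputDist_mem_stdSimplex hP hW)
      (outputDist_mem_stdSimplex hP hV) hε0 hε1
      fun y => abs_sum_mul_sub_sum_mul_le hP fun x => hclose x y
  have hcond : |condEntropy P W - condEntropy P V| ≤ B :=
    abs_sum_mul_sub_sum_mul_le hP fun x =>
      abs_shannonEntropy_sub_le_of_close hY (hW x) (hV x) hε0 hε1 (hclose x)
  have hbound : 2 * (n - 1) * binEnt ε + 2 * (n - 1) * Real.logb 2 (n - 1) * ε =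
      (B + B) / Real.log 2 := by
    rw [binEnt_eq_binEntropy_div, Real.logb, hB]
    ring
  rw [hbound, mutualInfo_eq_shannonEntropy_sub_condEntropy hP0 hW0,
    mutualInfo_eq_shannonEntropy_sub_condEntropy hP0 hV0, ← sub_div, abs_div,
    abs_of_pos (Real.log_pos one_lt_two), sub_sub_sub_comm]
  gcongr
  exact (abs_sub _ _).trans (add_le_add houtput hcond)
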